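/- For all named GS4 derivations P with conclusion ⊢Γ,A∧B, the axiom graphs of the conjunction inversions satisfy ⟦inv_l(P, A∧B)⟧ ⊑ ⟦P⟧↾_{Γ,A} and ⟦inv_r(P, A∧B)⟧ ⊑ ⟦P⟧↾_{Γ,B}. -/

import Mathlib

open scoped Classical

noncomputable section

namespace GS4

/-- Named classical propositional formulas over atoms `α`, with names in `ℕ`. -/
inductive NForm (α : Type) : Type
  | atom : ℕ → α → NForm α
  | or   : NForm α → NForm α → NForm α
  | and  : NForm α → NForm α → NForm α

variable {α : Type}

/-- Name-preserving De Morgan negation, w.r.t. an involution `bar` on atoms. -/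
def negF (bar : α → α) : NForm α → NForm α
  | .atom x a => .atom x (bar a)
  | .or A B => .and (negF bar A) (negF bar B)
  | .and A B => .or (negF bar A) (negF bar B)

/-- The set of names occurring in a named formula. -/
def NForm.names : NForm α → Set ℕ
  | .atom x _ => {x}
  | .or A B => A.names ∪ B.names
  | .and A B => A.names ∪ B.names

/-- A named formula is sharing-free if every name occurs at most once in it. -/
def NForm.sharingFree : NForm α → Prop
  | .atom _ _ => True
  | .or A B => A.sharingFree ∧ B.sharingFree ∧ Disjoint A.names B.names
  | .and A B => A.sharingFree ∧ B.sharingFree ∧ Disjoint A.names B.names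

def NForm.isAtom : NForm α → Prop
  | .atom _ _ => True
  | _ => False

/-- Anonymous formulas (shapes): `A ≡ B` iff their shapes coincide. -/
inductive Shape (α : Type) : Type
  | atom : α → Shape α
  | or   : Shape α → Shape α → Shape α
  | and  : Shape α → Shape α → Shape α

def NForm.shape : NForm α → Shape α
  | .atom _ a => .atom a
  | .or A B => .or A.shape B.shape
  | .and A B => .and A.shape B.shape

/-- `HasAtom A x a`: the atomic formula `x:a` occurs in `A`. -/
def HasAtom : NForm α → ℕ → α → Prop
  | .atom y b, x, a => y = x ∧ b = a
  | .or A B, x, a => HasAtom A x a ∨ HasAtom B x a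
  | .and A B, x, a => HasAtom A x a ∨ HasAtom B x a

/-- Names of a finite set of named formulas. -/
def snames (Γ : Finset (NForm α)) : Set ℕ := ⋃ A ∈ Γ, A.names

/-- A finite set of named formulas is sharing-free if all its elements are
sharing-free with pairwise disjoint name sets. -/
def SFSet (Γ : Finset (NForm α)) : Prop :=
  (∀ A ∈ Γ, A.sharingFree) ∧
  ∀ A ∈ Γ, ∀ B ∈ Γ, A ≠ B → Disjoint A.names B.names

/-- `x:a` occurs in some formula of `Γ` (i.e. `Γ[x] = a` for sharing-free `Γ`). -/
def HasAtomS (Γ : Finset (NForm α)) (x : ℕ) (a : α) : Prop :=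
  ∃ A ∈ Γ, HasAtom A x a

/-- Branch sets of named formulas. -/
def BrF : NForm α → Set (Set ℕ)
  | .atom x _ => {{x}}
  | .or A B => {X | ∃ Y ∈ BrF A, ∃ Z ∈ BrF B, X = Y ∪ Z}
  | .and A B => BrF A ∪ BrF B

/-- Branch sets of sequents (finite sharing-free sets of named formulas). -/
def BrS (Γ : Finset (NForm α)) : Set (Set ℕ) :=
  {X | X ⊆ snames Γ ∧ ∀ A ∈ Γ, X ∩ A.names ∈ BrF A}

/-! ## Branch-labeled name graphs -/

/-- A branch-labeled name graph: vertices and a relation between unordered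
pairs of vertices and branch labels. -/
structure BLGraph : Type where
  verts : Set ℕ
  rel : Sym2 ℕ → Set ℕ → Prop

/-- Well-formedness of a bl-graph: related pairs consist of distinct vertices,
labels are sets of vertices, and each edge is included in its labels. -/
def BLGraph.IsBL (G : BLGraph) : Prop :=
  ∀ e X, G.rel e X → ¬ e.IsDiag ∧ X ⊆ G.verts ∧ ∀ v ∈ e, v ∈ X

def BLGraph.Edges (G : BLGraph) : Set (Sym2 ℕ) := {e | ∃ X, G.rel e X}

def BLGraph.Br (G : BLGraph) : Set (Set ℕ) := {X | ∃ e, G.rel e X}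

def BLGraph.union (G H : BLGraph) : BLGraph :=
  ⟨G.verts ∪ H.verts, fun e X => G.rel e X ∨ H.rel e X⟩

/-- Restriction `G↾_S` of a bl-graph. -/
def BLGraph.restrict (G : BLGraph) (S : Set ℕ) : BLGraph :=
  ⟨G.verts ∩ S, fun e X => G.rel e X ∧ X ⊆ S⟩

/-- The interface-relativized edge-branch relation `e ⊰^I_G X`. -/
def BLGraph.relI (G : BLGraph) (I : Set ℕ) (e : Sym2 ℕ) (X : Set ℕ) : Prop :=
  ∃ Y, G.rel e Y ∧ X = Y \ I

/-- `z 0, …, z (n-1)` is an `X`-labeled alternating path between `G` and `H`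
through the interface `I`. -/
def AltPath (G H : BLGraph) (I X : Set ℕ) (n : ℕ) (z : ℕ → ℕ) : Prop :=
  1 < n ∧
  (∀ i < n, ∀ j < n, z i = z j → i = j) ∧
  (∀ i, 0 < i → i + 1 < n → z i ∈ I) ∧
  ((∀ i, i + 1 < n →
      (Even i → G.relI I s(z i, z (i + 1)) X) ∧ (¬ Even i → H.relI I s(z i, z (i + 1)) X)) ∨
   (∀ i, i + 1 < n →
      (Even i → H.relI I s(z i, z (i + 1)) X) ∧ (¬ Even i → G.relI I s(z i, z (i + 1)) X)))

/-- Composition of bl-graphs over an interface `I`. -/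
def BLGraph.comp (G H : BLGraph) (I : Set ℕ) : BLGraph :=
  ⟨(G.verts ∪ H.verts) \ I,
   fun e X => ∃ n z, AltPath G H I X n z ∧ z 0 ∉ I ∧ z (n - 1) ∉ I ∧
     e = s(z 0, z (n - 1))⟩

/-- The weakening operator on bl-graphs: add vertices `V` and extend every
branch label by a member of `Brs`. -/
def blwk (V : Set ℕ) (Brs : Set (Set ℕ)) (G : BLGraph) : BLGraph :=
  ⟨G.verts ∪ V, fun e X => ∃ Y Z, G.rel e Y ∧ Z ∈ Brs ∧ X = Y ∪ Z⟩

/-- The bl-identity graph `id_{A,C}` on a pair of dual formulas. -/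
def blid : NForm α → NForm α → BLGraph
  | .atom x _, .atom y _ => ⟨{x, y}, fun e X => e = s(x, y) ∧ X = {x, y}⟩
  | .or A1 A2, .and C1 C2 =>
      (blwk A2.names (BrF A2) (blid A1 C1)).union (blwk A1.names (BrF A1) (blid A2 C2))
  | .and A1 A2, .or C1 C2 =>
      (blwk C2.names (BrF C2) (blid A1 C1)).union (blwk C1.names (BrF C1) (blid A2 C2))
  | _, _ => ⟨∅, fun _ _ => False⟩

/-! ## Simple name graphs -/

/-- A simple name graph. -/
structure NGraph : Type where
  verts : Set ℕ
  edges : Set (Sym2 ℕ)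

/-- Subgraph relation `H ⊑ G`. -/
def NGraph.Sub (H G : NGraph) : Prop := H.verts ⊆ G.verts ∧ H.edges ⊆ G.edges

def NGraph.union (G H : NGraph) : NGraph := ⟨G.verts ∪ H.verts, G.edges ∪ H.edges⟩

/-- Induced subgraph `G↾_S`. -/
def NGraph.restrict (G : NGraph) (S : Set ℕ) : NGraph :=
  ⟨G.verts ∩ S, {e ∈ G.edges | ∀ v ∈ e, v ∈ S}⟩

/-- Alternating paths between simple name graphs through an interface. -/
def NAltPath (G H : NGraph) (I : Set ℕ) (n : ℕ) (z : ℕ → ℕ) : Prop :=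
  0 < n ∧
  (∀ i < n, ∀ j < n, z i = z j → i = j) ∧
  (∀ i, 0 < i → i + 1 < n → z i ∈ I) ∧
  ((∀ i, i + 1 < n →
      (Even i → s(z i, z (i + 1)) ∈ G.edges) ∧ (¬ Even i → s(z i, z (i + 1)) ∈ H.edges)) ∨
   (∀ i, i + 1 < n →
      (Even i → s(z i, z (i + 1)) ∈ H.edges) ∧ (¬ Even i → s(z i, z (i + 1)) ∈ G.edges)))

/-- Composition of simple name graphs over an interface. -/
def NGraph.comp (G H : NGraph) (I : Set ℕ) : NGraph :=
  ⟨(G.verts ∪ H.verts) \ I,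
   {e | ∃ x y, x ≠ y ∧ x ∈ (G.verts ∪ H.verts) \ I ∧ y ∈ (G.verts ∪ H.verts) \ I ∧
        e = s(x, y) ∧ ∃ n z, NAltPath G H I n z ∧ z 0 = x ∧ z (n - 1) = y}⟩

/-- The identity graph `Id_{A,C}` on a pair of dual formulas. -/
def idg : NForm α → NForm α → NGraph
  | .atom x _, .atom y _ => ⟨{x, y}, {s(x, y)}⟩
  | .or A1 A2, .and C1 C2 => (idg A1 C1).union (idg A2 C2)
  | .and A1 A2, .or C1 C2 => (idg A1 C1).union (idg A2 C2)
  | _, _ => ⟨∅, ∅⟩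

/-- The edgeless (weakening) graph on the names of `Γ`. -/
def wkg (Γ : Finset (NForm α)) : NGraph := ⟨snames Γ, ∅⟩

/-! ## Named GS4 derivations -/

/-- Named GS4 derivation trees. -/
inductive Deriv (α : Type) : Type
  | ax (Γ : Finset (NForm α)) (A C : NForm α)
  | cut (A : NForm α) (P Q : Deriv α)
  | sup (P Q : Deriv α)
  | orI (A B : NForm α) (P : Deriv α)
  | andI (A B : NForm α) (P Q : Deriv α)

/-- Conclusion of a derivation tree. -/
def concl : Deriv α → Finset (NForm α)
  | .ax Γ A C => insert A (insert C Γ)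
  | .cut A P _ => (concl P).erase A
  | .sup P _ => concl P
  | .orI A B P => insert (NForm.or A B) (((concl P).erase A).erase B)
  | .andI A B P _ => insert (NForm.and A B) ((concl P).erase A)

/-- Well-formedness of derivation trees w.r.t. the atom involution `bar`:
each rule is applied correctly to sharing-free named sequents. -/
def WF (bar : α → α) : Deriv α → Prop
  | .ax Γ A C =>
      A.shape = (negF bar C).shape ∧
      A.sharingFree ∧ C.sharingFree ∧ SFSet Γ ∧
      Disjoint A.names C.names ∧
      Disjoint A.names (snames Γ) ∧ Disjoint C.names (snames Γ)
  | .cut A P Q =>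
      WF bar P ∧ WF bar Q ∧
      ∃ Γ : Finset (NForm α), A ∉ Γ ∧ negF bar A ∉ Γ ∧
        concl P = insert A Γ ∧ concl Q = insert (negF bar A) Γ ∧
        A.sharingFree ∧ SFSet Γ ∧ Disjoint A.names (snames Γ)
  | .sup P Q => WF bar P ∧ WF bar Q ∧ concl P = concl Q
  | .orI A B P =>
      WF bar P ∧
      ∃ Γ : Finset (NForm α), A ∉ Γ ∧ B ∉ Γ ∧ A ≠ B ∧
        concl P = insert A (insert B Γ) ∧
        A.sharingFree ∧ B.sharingFree ∧ SFSet Γ ∧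
        Disjoint A.names B.names ∧
        Disjoint A.names (snames Γ) ∧ Disjoint B.names (snames Γ)
  | .andI A B P Q =>
      WF bar P ∧ WF bar Q ∧
      ∃ Γ : Finset (NForm α), A ∉ Γ ∧ B ∉ Γ ∧
        concl P = insert A Γ ∧ concl Q = insert B Γ ∧
        A.sharingFree ∧ B.sharingFree ∧ SFSet Γ ∧
        Disjoint A.names B.names ∧
        Disjoint A.names (snames Γ) ∧ Disjoint B.names (snames Γ)

/-- A derivation is cut-free if it contains no cut rule. -/
def CutFree : Deriv α → Prop
  | .ax _ _ _ => True
  | .cut _ _ _ => False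
  | .sup P Q => CutFree P ∧ CutFree Q
  | .orI _ _ P => CutFree P
  | .andI _ _ P Q => CutFree P ∧ CutFree Q

/-- The branch-labeled axiom graph `⟨⟨P⟩⟩` of a derivation. -/
def blaxg : Deriv α → BLGraph
  | .ax Γ A C => blwk (snames Γ) (BrS Γ) (blid A C)
  | .cut A P Q => BLGraph.comp (blaxg P) (blaxg Q) A.names
  | .sup P Q => (blaxg P).union (blaxg Q)
  | .orI _ _ P => blaxg P
  | .andI _ _ P Q => (blaxg P).union (blaxg Q)

/-- The (simple) axiom graph `⟦P⟧` of a derivation. -/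
def axg : Deriv α → NGraph
  | .ax Γ A C => (wkg Γ).union (idg A C)
  | .cut A P Q => NGraph.comp (axg P) (axg Q) A.names
  | .sup P Q => (axg P).union (axg Q)
  | .orI _ _ P => axg P
  | .andI _ _ P Q => (axg P).union (axg Q)

/-! ## Inversion and isolation -/

/-- Inversion of a disjunction `D ∨ E` in the conclusion. -/
def inv (D E : NForm α) : Deriv α → Deriv α
  | .ax Γ A C =>
      if A = NForm.or D E then
        match C with
        | .and C1 C2 =>
            .andI C1 C2 (.ax (insert E Γ) D C1) (.ax (insert D Γ) E C2)
        | _ => .ax Γ A C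
      else if C = NForm.or D E then
        match A with
        | .and A1 A2 =>
            .andI A1 A2 (.ax (insert E Γ) A1 D) (.ax (insert D Γ) A2 E)
        | _ => .ax Γ A C
      else
        .ax (insert D (insert E (Γ.erase (NForm.or D E)))) A C
  | .cut A P Q => .cut A (inv D E P) (inv D E Q)
  | .sup P Q => .sup (inv D E P) (inv D E Q)
  | .orI A B P => if A = D ∧ B = E then P else .orI A B (inv D E P)
  | .andI A B P Q => .andI A B (inv D E P) (inv D E Q)

/-- Left inversion of a conjunction `D ∧ E` in the conclusion. -/
def invl (D E : NForm α) : Deriv α → Deriv α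
  | .ax Γ A C =>
      if A = NForm.and D E then
        match C with
        | .or C1 C2 => .orI C1 C2 (.ax (insert C2 Γ) D C1)
        | _ => .ax Γ A C
      else if C = NForm.and D E then
        match A with
        | .or A1 A2 => .orI A1 A2 (.ax (insert A2 Γ) A1 D)
        | _ => .ax Γ A C
      else
        .ax (insert D (Γ.erase (NForm.and D E))) A C
  | .cut A P Q => .cut A (invl D E P) (invl D E Q)
  | .sup P Q => .sup (invl D E P) (invl D E Q)
  | .orI A B P => .orI A B (invl D E P)
  | .andI A B P Q => if A = D ∧ B = E then P else .andI A B (invl D E P) (invl D E Q)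

/-- Right inversion of a conjunction `D ∧ E` in the conclusion. -/
def invr (D E : NForm α) : Deriv α → Deriv α
  | .ax Γ A C =>
      if A = NForm.and D E then
        match C with
        | .or C1 C2 => .orI C1 C2 (.ax (insert C1 Γ) E C2)
        | _ => .ax Γ A C
      else if C = NForm.and D E then
        match A with
        | .or A1 A2 => .orI A1 A2 (.ax (insert A1 Γ) A2 E)
        | _ => .ax Γ A C
      else
        .ax (insert E (Γ.erase (NForm.and D E))) A C
  | .cut A P Q => .cut A (invr D E P) (invr D E Q)
  | .sup P Q => .sup (invr D E P) (invr D E Q)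
  | .orI A B P => .orI A B (invr D E P)
  | .andI A B P Q => if A = D ∧ B = E then Q else .andI A B (invr D E P) (invr D E Q)

/-- Isolation of a non-atomic formula in the conclusion. -/
def isl : NForm α → Deriv α → Deriv α
  | .or A B, P => .orI A B (inv A B P)
  | .and A B, P => .andI A B (invl A B P) (invr A B P)
  | .atom _ _, P => P

/-- Totality of a bl-graph w.r.t. a sharing-free named sequent. -/
def Total (bar : α → α) (G : BLGraph) (Γ : Finset (NForm α)) : Prop :=
  G.verts = snames Γ ∧
  G.Br = BrS Γ ∧
  ∀ x y : ℕ, s(x, y) ∈ G.Edges →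
    ∀ a b : α, HasAtomS Γ x a → HasAtomS Γ y b → a = bar b

end GS4

namespace GS4

theorem mem_snames {Γ : Finset (NForm α)} {x : ℕ} :
    x ∈ snames Γ ↔ ∃ F ∈ Γ, x ∈ F.names := by
  simp [snames]

theorem snames_insert (F : NForm α) (Γ : Finset (NForm α)) :
    snames (insert F Γ) = F.names ∪ snames Γ := by
  simp [snames]

theorem snames_mono {Γ Δ : Finset (NForm α)} (h : Γ ⊆ Δ) : snames Γ ⊆ snames Δ :=
  Set.biUnion_subset_biUnion_left h

theorem names_subset_snames {F : NForm α} {Γ : Finset (NForm α)} (h : F ∈ Γ) :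
    F.names ⊆ snames Γ :=
  fun _ hx => mem_snames.2 ⟨F, h, hx⟩

theorem snames_erase_insert_subset (F X : NForm α) (Γ : Finset (NForm α)) :
    snames ((insert F Γ).erase X) ⊆ F.names ∪ snames (Γ.erase X) := by
  rw [← snames_insert]
  apply snames_mono
  intro Y
  simp only [Finset.mem_erase, Finset.mem_insert]
  tauto

theorem NForm.names_nonempty (F : NForm α) : F.names.Nonempty := by
  induction F with
  | atom x a => exact ⟨x, rfl⟩
  | or A B ihA _ => exact ihA.inl
  | and A B ihA _ => exact ihA.inl

theorem not_mem_of_disjoint_snames {F : NForm α} {Γ : Finset (NForm α)}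
    (h : Disjoint F.names (snames Γ)) : F ∉ Γ := fun hF =>
  have ⟨_, hx⟩ := F.names_nonempty
  Set.disjoint_left.1 h hx (names_subset_snames hF hx)

theorem ne_of_disjoint_names {F G : NForm α} (h : Disjoint F.names G.names) : F ≠ G := by
  rintro rfl
  have ⟨_, hx⟩ := F.names_nonempty
  exact Set.disjoint_left.1 h hx hx

theorem names_negF (bar : α → α) (F : NForm α) : (negF bar F).names = F.names := by
  induction F with
  | atom x a => rfl
  | or A B ihA ihB => simp [negF, NForm.names, ihA, ihB]
  | and A B ihA ihB => simp [negF, NForm.names, ihA, ihB]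

/-- The endpoints of all edges of `G` are vertices of `G`. -/
def NGraph.EdgesInVerts (G : NGraph) : Prop := ∀ e ∈ G.edges, ∀ v ∈ e, v ∈ G.verts

theorem NGraph.EdgesInVerts.union {G H : NGraph} (hG : G.EdgesInVerts) (hH : H.EdgesInVerts) :
    (G.union H).EdgesInVerts := by
  rintro e (he | he) v hv
  · exact Or.inl (hG e he v hv)
  · exact Or.inr (hH e he v hv)

theorem NGraph.edgesInVerts_comp (G H : NGraph) (I : Set ℕ) : (G.comp H I).EdgesInVerts := by
  rintro e ⟨x, y, -, hx, hy, rfl, -⟩ v hv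
  rcases Sym2.mem_iff.1 hv with rfl | rfl
  · exact hx
  · exact hy

theorem NGraph.Sub.refl (G : NGraph) : G.Sub G := ⟨subset_rfl, subset_rfl⟩

theorem NGraph.Sub.restrict {G H : NGraph} {S : Set ℕ} (h : G.Sub H) (hG : G.EdgesInVerts)
    (hS : G.verts ⊆ S) : G.Sub (H.restrict S) :=
  ⟨fun _ hx => ⟨h.1 hx, hS hx⟩, fun e he => ⟨h.2 he, fun v hv => hS (hG e he v hv)⟩⟩

theorem NGraph.Sub.union_left {G H : NGraph} (K : NGraph) (h : G.Sub H) : G.Sub (H.union K) :=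
  ⟨h.1.trans Set.subset_union_left, h.2.trans Set.subset_union_left⟩

theorem NGraph.Sub.union_right {G H : NGraph} (K : NGraph) (h : G.Sub H) : G.Sub (K.union H) :=
  ⟨h.1.trans Set.subset_union_right, h.2.trans Set.subset_union_right⟩

theorem NGraph.Sub.restrict_mono {G H : NGraph} {S T : Set ℕ} (h : G.Sub (H.restrict S))
    (hST : S ⊆ T) : G.Sub (H.restrict T) :=
  ⟨fun _ hx => ⟨(h.1 hx).1, hST (h.1 hx).2⟩,
    fun _ he => ⟨(h.2 he).1, fun v hv => hST ((h.2 he).2 v hv)⟩⟩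

theorem NGraph.Sub.union_restrict {G G' H H' : NGraph} {S : Set ℕ}
    (h : G.Sub (H.restrict S)) (h' : G'.Sub (H'.restrict S)) :
    (G.union G').Sub ((H.union H').restrict S) := by
  constructor
  · rintro x (hx | hx)
    · exact ⟨Or.inl (h.1 hx).1, (h.1 hx).2⟩
    · exact ⟨Or.inr (h'.1 hx).1, (h'.1 hx).2⟩
  · rintro e (he | he)
    · exact ⟨Or.inl (h.2 he).1, (h.2 he).2⟩
    · exact ⟨Or.inr (h'.2 he).1, (h'.2 he).2⟩

theorem NAltPath.mono {G G' H H' : NGraph} {I : Set ℕ} {n : ℕ} {z : ℕ → ℕ}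
    (h : NAltPath G G' I n z) (hG : G.edges ⊆ H.edges) (hG' : G'.edges ⊆ H'.edges) :
    NAltPath H H' I n z := by
  obtain ⟨hn, hinj, hI, halt⟩ := h
  refine ⟨hn, hinj, hI, halt.imp ?_ ?_⟩
  · exact fun h i hi => ⟨fun he => hG ((h i hi).1 he), fun ho => hG' ((h i hi).2 ho)⟩
  · exact fun h i hi => ⟨fun he => hG' ((h i hi).1 he), fun ho => hG ((h i hi).2 ho)⟩

theorem NGraph.Sub.comp {G G' H H' : NGraph} (I : Set ℕ) (h : G.Sub H) (h' : G'.Sub H') :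
    (G.comp G' I).Sub (H.comp H' I) := by
  have hV : (G.verts ∪ G'.verts) \ I ⊆ (H.verts ∪ H'.verts) \ I :=
    Set.sdiff_subset_sdiff_left (Set.union_subset_union h.1 h'.1)
  refine ⟨hV, ?_⟩
  rintro e ⟨x, y, hxy, hx, hy, he, n, z, hz, hz0, hz1⟩
  exact ⟨x, y, hxy, hV hx, hV hy, he, n, z, hz.mono h.2 h'.2, hz0, hz1⟩

theorem NGraph.Sub.of_restrict {G H : NGraph} {S : Set ℕ} (h : G.Sub (H.restrict S)) : G.Sub H :=
  ⟨fun _ hx => (h.1 hx).1, fun _ he => (h.2 he).1⟩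

theorem NGraph.Sub.comp_restrict {G G' H H' : NGraph} {I S : Set ℕ}
    (h : G.Sub (H.restrict (I ∪ S))) (h' : G'.Sub (H'.restrict (I ∪ S))) :
    (G.comp G' I).Sub ((H.comp H' I).restrict S) := by
  refine (h.of_restrict.comp I h'.of_restrict).restrict (G.edgesInVerts_comp G' I) ?_
  rintro x ⟨hx | hx, hI⟩
  · exact (h.1 hx).2.resolve_left hI
  · exact (h'.1 hx).2.resolve_left hI

theorem idg_edgesInVerts (A C : NForm α) : (idg A C).EdgesInVerts := by
  induction A generalizing C with
  | atom x a =>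
    cases C with
    | atom y b =>
      rintro e rfl v hv
      exact Sym2.mem_iff.1 hv
    | or _ _ => rintro e ⟨⟩
    | and _ _ => rintro e ⟨⟩
  | or A₁ A₂ ih₁ ih₂ =>
    cases C with
    | and C₁ C₂ => exact (ih₁ C₁).union (ih₂ C₂)
    | atom _ _ => rintro e ⟨⟩
    | or _ _ => rintro e ⟨⟩
  | and A₁ A₂ ih₁ ih₂ =>
    cases C with
    | or C₁ C₂ => exact (ih₁ C₁).union (ih₂ C₂)
    | atom _ _ => rintro e ⟨⟩
    | and _ _ => rintro e ⟨⟩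

theorem idg_verts {bar : α → α} {A C : NForm α} (h : A.shape = (negF bar C).shape) :
    (idg A C).verts = A.names ∪ C.names := by
  induction A generalizing C with
  | atom x a => cases C <;> simp_all [negF, NForm.shape, idg, NForm.names, Set.pair_comm]
  | or A₁ A₂ ih₁ ih₂ =>
    cases C with
    | and C₁ C₂ =>
      simp only [negF, NForm.shape, Shape.or.injEq] at h
      simp only [idg, NGraph.union, NForm.names, ih₁ h.1, ih₂ h.2]
      exact Set.union_union_union_comm ..
    | atom _ _ => simp [negF, NForm.shape] at h
    | or _ _ => simp [negF, NForm.shape] at h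
  | and A₁ A₂ ih₁ ih₂ =>
    cases C with
    | or C₁ C₂ =>
      simp only [negF, NForm.shape, Shape.and.injEq] at h
      simp only [idg, NGraph.union, NForm.names, ih₁ h.1, ih₂ h.2]
      exact Set.union_union_union_comm ..
    | atom _ _ => simp [negF, NForm.shape] at h
    | and _ _ => simp [negF, NForm.shape] at h

theorem axg_orI (A B : NForm α) (P : Deriv α) : axg (.orI A B P) = axg P := rfl

theorem axg_edgesInVerts (P : Deriv α) : (axg P).EdgesInVerts := by
  induction P with
  | ax Γ A C =>
    exact NGraph.EdgesInVerts.union (by rintro e ⟨⟩) (idg_edgesInVerts A C)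
  | cut A P Q _ _ => exact (axg P).edgesInVerts_comp (axg Q) A.names
  | sup P Q ihP ihQ => exact ihP.union ihQ
  | orI A B P ih => exact ih
  | andI A B P Q ihP ihQ => exact ihP.union ihQ

theorem axg_ax_verts {bar : α → α} {A C : NForm α} (h : A.shape = (negF bar C).shape)
    (Γ : Finset (NForm α)) : (axg (.ax Γ A C)).verts = snames Γ ∪ (A.names ∪ C.names) := by
  rw [← idg_verts h]
  rfl

theorem axg_verts_subset {bar : α → α} {P : Deriv α} (hP : WF bar P) :
    (axg P).verts ⊆ snames (concl P) := by
  induction P with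
  | ax Γ A C =>
    rw [axg_ax_verts hP.1, concl, snames_insert, snames_insert]
    grind
  | cut A P Q ihP ihQ =>
    obtain ⟨hwP, hwQ, Γ, hA, -, hcP, hcQ, -⟩ := hP
    have hP := ihP hwP
    have hQ := ihQ hwQ
    rw [hcP, snames_insert] at hP
    rw [hcQ, snames_insert, names_negF] at hQ
    rw [concl, hcP, Finset.erase_insert hA]
    rintro x ⟨hx | hx, hI⟩
    · exact (hP hx).resolve_left hI
    · exact (hQ hx).resolve_left hI
  | sup P Q ihP ihQ =>
    obtain ⟨hwP, hwQ, hc⟩ := hP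
    exact Set.union_subset (ihP hwP) (hc ▸ ihQ hwQ)
  | orI A B P ih =>
    obtain ⟨hwP, Γ, hA, hB, hAB, hc, -⟩ := hP
    have h := ih hwP
    rw [concl, hc, Finset.erase_insert (by simp [hA, hAB]), Finset.erase_insert hB, snames_insert]
    rwa [hc, snames_insert, snames_insert, ← Set.union_assoc] at h
  | andI A B P Q ihP ihQ =>
    obtain ⟨hwP, hwQ, Γ, hA, hB, hcP, hcQ, -⟩ := hP
    have hP := ihP hwP
    have hQ := ihQ hwQ
    rw [hcP, snames_insert] at hP
    rw [hcQ, snames_insert] at hQ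
    rw [concl, hcP, Finset.erase_insert hA, snames_insert]
    exact Set.union_subset (hP.trans (Set.union_subset_union_left _ Set.subset_union_left))
      (hQ.trans (Set.union_subset_union_left _ Set.subset_union_right))

/-- To embed the graph of one axiom in a restriction of the graph of another, it suffices to
compare their identity graphs and their names. -/
theorem axg_ax_sub_restrict {bar : α → α} {A C A' C' : NForm α} {Γ Γ' : Finset (NForm α)}
    {S : Set ℕ} (h : A.shape = (negF bar C).shape) (h' : A'.shape = (negF bar C').shape)
    (hid : (idg A C).Sub (idg A' C'))
    (hΓ : snames Γ ⊆ snames Γ' ∪ (A'.names ∪ C'.names))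
    (hS : snames Γ ∪ (A.names ∪ C.names) ⊆ S) :
    (axg (.ax Γ A C)).Sub ((axg (.ax Γ' A' C')).restrict S) := by
  refine NGraph.Sub.restrict ⟨?_, ?_⟩ (axg_edgesInVerts _) (by rwa [axg_ax_verts h])
  · rw [axg_ax_verts h, axg_ax_verts h']
    refine Set.union_subset hΓ (Set.subset_union_of_subset_right ?_ _)
    rw [← idg_verts h, ← idg_verts h']
    exact hid.1
  · rintro e (⟨⟨⟩⟩ | he)
    exact Or.inr (hid.2 he)

theorem axg_inv_ax_sub {bar : α → α} {Γ : Finset (NForm α)} {A C D E : NForm α}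
    (hP : WF bar (.ax Γ A C)) (hDE : NForm.and D E ∈ concl (.ax Γ A C)) :
    (axg (invl D E (.ax Γ A C))).Sub ((axg (.ax Γ A C)).restrict
      (snames ((concl (.ax Γ A C)).erase (.and D E)) ∪ D.names)) ∧
    (axg (invr D E (.ax Γ A C))).Sub ((axg (.ax Γ A C)).restrict
      (snames ((concl (.ax Γ A C)).erase (.and D E)) ∪ E.names)) := by
  obtain ⟨hshape, -, -, -, hAC, hAΓ, hCΓ⟩ := hP
  have hA := not_mem_of_disjoint_snames hAΓ
  have hC := not_mem_of_disjoint_snames hCΓ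
  have hne := ne_of_disjoint_names hAC
  simp only [concl] at hDE ⊢
  by_cases hAe : A = .and D E
  · subst hAe
    rw [Finset.erase_insert (by simp [hne, hA]), snames_insert]
    cases C with
    | or C₁ C₂ =>
      have hs := hshape
      simp only [negF, NForm.shape, Shape.and.injEq] at hs
      simp only [invl, invr, if_true, axg_orI]
      refine ⟨axg_ax_sub_restrict hs.1 hshape ((NGraph.Sub.refl _).union_left _) ?_ ?_,
        axg_ax_sub_restrict hs.2 hshape ((NGraph.Sub.refl _).union_right _) ?_ ?_⟩ <;>
      · simp only [snames_insert, NForm.names]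
        grind
    | atom _ _ => simp [negF, NForm.shape] at hshape
    | and _ _ => simp [negF, NForm.shape] at hshape
  by_cases hCe : C = .and D E
  · subst hCe
    rw [Finset.insert_comm, Finset.erase_insert (by simp [hne.symm, hC]), snames_insert]
    cases A with
    | or A₁ A₂ =>
      have hs := hshape
      simp only [negF, NForm.shape, Shape.or.injEq] at hs
      simp only [invl, invr, hAe, if_true, if_false, axg_orI]
      refine ⟨axg_ax_sub_restrict hs.1 hshape ((NGraph.Sub.refl _).union_left _) ?_ ?_,
        axg_ax_sub_restrict hs.2 hshape ((NGraph.Sub.refl _).union_right _) ?_ ?_⟩ <;>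
      · simp only [snames_insert, NForm.names]
        grind
    | atom _ _ => simp [negF, NForm.shape] at hshape
    | and _ _ => simp [negF, NForm.shape] at hshape
  · have hΓ : NForm.and D E ∈ Γ := by
      simpa [Ne.symm hAe, Ne.symm hCe] using hDE
    have hsub := names_subset_snames hΓ
    have herase := snames_mono (Γ.erase_subset (.and D E))
    rw [Finset.erase_insert_of_ne hAe, Finset.erase_insert_of_ne hCe]
    simp only [invl, invr, hAe, hCe, if_false, snames_insert]
    simp only [NForm.names] at hsub
    refine ⟨axg_ax_sub_restrict hshape hshape (NGraph.Sub.refl _) ?_ ?_,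
      axg_ax_sub_restrict hshape hshape (NGraph.Sub.refl _) ?_ ?_⟩ <;>
    · simp only [snames_insert]
      grind

theorem axg_inv_sub_erase {bar : α → α} {D E : NForm α} {P : Deriv α} (hP : WF bar P)
    (hDE : NForm.and D E ∈ concl P) :
    (axg (invl D E P)).Sub
      ((axg P).restrict (snames ((concl P).erase (.and D E)) ∪ D.names)) ∧
    (axg (invr D E P)).Sub
      ((axg P).restrict (snames ((concl P).erase (.and D E)) ∪ E.names)) := by
  induction P with
  | ax Γ A C => exact axg_inv_ax_sub hP hDE
  | cut A P Q ihP ihQ =>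
    obtain ⟨hwP, hwQ, Γ, hA, -, hcP, hcQ, -⟩ := hP
    rw [concl, hcP, Finset.erase_insert hA] at hDE ⊢
    have hP := ihP hwP (by simp [hcP, hDE])
    have hQ := ihQ hwQ (by simp [hcQ, hDE])
    have hsP := snames_erase_insert_subset A (.and D E) Γ
    have hsQ := snames_erase_insert_subset (negF bar A) (.and D E) Γ
    rw [← hcP] at hsP
    rw [← hcQ, names_negF] at hsQ
    exact ⟨(hP.1.restrict_mono (by grind)).comp_restrict (hQ.1.restrict_mono (by grind)),
      (hP.2.restrict_mono (by grind)).comp_restrict (hQ.2.restrict_mono (by grind))⟩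
  | sup P Q ihP ihQ =>
    obtain ⟨hwP, hwQ, hc⟩ := hP
    have hP := ihP hwP hDE
    have hQ := ihQ hwQ (hc ▸ hDE)
    rw [← hc] at hQ
    exact ⟨hP.1.union_restrict hQ.1, hP.2.union_restrict hQ.2⟩
  | orI A B P ih =>
    obtain ⟨hwP, Γ, hA, hB, hAB, hc, -⟩ := hP
    rw [concl, hc, Finset.erase_insert (by simp [hA, hAB]), Finset.erase_insert hB] at hDE ⊢
    have hDE : NForm.and D E ∈ Γ := by simpa using hDE
    have h := ih hwP (by simp [hc, hDE])
    rw [Finset.erase_insert_of_ne (by simp), snames_insert]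
    have hs := (snames_erase_insert_subset A (.and D E) (insert B Γ)).trans
      (Set.union_subset_union_right _ (snames_erase_insert_subset B (.and D E) Γ))
    rw [← hc, ← Set.union_assoc] at hs
    simp only [NForm.names]
    exact ⟨h.1.restrict_mono (by grind), h.2.restrict_mono (by grind)⟩
  | andI A B P Q ihP ihQ =>
    have hvP := axg_verts_subset hP.1
    have hvQ := axg_verts_subset hP.2.1
    obtain ⟨hwP, hwQ, Γ, hA, -, hcP, hcQ, -, -, -, -, hAΓ, hBΓ⟩ := hP
    have hABΓ : NForm.and A B ∉ Γ :=
      not_mem_of_disjoint_snames (Set.disjoint_union_left.2 ⟨hAΓ, hBΓ⟩)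
    rw [concl, hcP, Finset.erase_insert hA] at hDE ⊢
    by_cases heq : A = D ∧ B = E
    · obtain ⟨rfl, rfl⟩ := heq
      rw [Finset.erase_insert hABΓ]
      rw [hcP, snames_insert, Set.union_comm] at hvP
      rw [hcQ, snames_insert, Set.union_comm] at hvQ
      simp only [invl, invr, and_self, if_true]
      exact ⟨((NGraph.Sub.refl _).union_left _).restrict (axg_edgesInVerts P) hvP,
        ((NGraph.Sub.refl _).union_right _).restrict (axg_edgesInVerts Q) hvQ⟩
    · have hne : NForm.and A B ≠ .and D E := by simpa using heq
      have hDE : NForm.and D E ∈ Γ := (Finset.mem_insert.1 hDE).resolve_left hne.symm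
      have hP := ihP hwP (by simp [hcP, hDE])
      have hQ := ihQ hwQ (by simp [hcQ, hDE])
      have hsP := snames_erase_insert_subset A (.and D E) Γ
      have hsQ := snames_erase_insert_subset B (.and D E) Γ
      rw [← hcP] at hsP
      rw [← hcQ] at hsQ
      rw [Finset.erase_insert_of_ne hne, snames_insert]
      simp only [invl, invr, heq, if_false, NForm.names]
      exact ⟨(hP.1.restrict_mono (by grind)).union_restrict (hQ.1.restrict_mono (by grind)),
        (hP.2.restrict_mono (by grind)).union_restrict (hQ.2.restrict_mono (by grind))⟩

end GS4

/-- the axiom graphs of the conjunction inversions are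
subgraphs of the corresponding restrictions of the axiom graph. -/
theorem GS4.axg_inv_and_sub {α : Type} (bar : α → α)
    (hbar : Function.Involutive bar) (hfix : ∀ a, bar a ≠ a)
    (P : GS4.Deriv α) (hP : GS4.WF bar P)
    (Γ : Finset (GS4.NForm α)) (A B : GS4.NForm α)
    (hAB : GS4.NForm.and A B ∉ Γ)
    (hc : GS4.concl P = insert (GS4.NForm.and A B) Γ) :
    (GS4.axg (GS4.invl A B P)).Sub ((GS4.axg P).restrict (GS4.snames Γ ∪ A.names)) ∧
    (GS4.axg (GS4.invr A B P)).Sub ((GS4.axg P).restrict (GS4.snames Γ ∪ B.names)) := by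
  have h := axg_inv_sub_erase hP (hc ▸ Finset.mem_insert_self (NForm.and A B) Γ)
  rwa [hc, Finset.erase_insert hAB] at h
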